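/- Every stationary probability mass function π of the SPS occupancy chain is invariant under relabeling of slots: for every permutation σ of {0,…,m−1} and every state c ∈ S, π(σ∘c) = π(c), where (σ∘c)_u := σ(c_u) for each node u. (This uses that the stationary pmf of the chain is unique.) -/

import Mathlib

open Finset

/-- The set of empty slots of a state `c ∈ {0,…,m−1}^V`. -/
def emptyS (V m : ℕ) (c : Fin V → Fin m) : Finset (Fin m) :=
  Finset.univ \ Finset.univ.image c

/-- One-step transition probability of the SPS occupancy chain:
`P(d | c) = ∏_u [(1−p_E)·1{d_u = c_u} + (p_E / N(c))·1{d_u ∈ E(c)}]`. -/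
noncomputable def spsP (V m : ℕ) (pE : ℝ) (c d : Fin V → Fin m) : ℝ :=
  ∏ u : Fin V,
    ((1 - pE) * (if d u = c u then 1 else 0) +
      (pE / ((emptyS V m c).card : ℝ)) * (if d u ∈ emptyS V m c then 1 else 0))

/-!
The stationary vector is unique up to scaling, and relabeling the slots by `σ` is a symmetry of the
transition matrix, so it carries the stationary vector `π` to another one of the same mass, that is,
to `π` itself.

For uniqueness, let `x` be a stationary signed vector of mass zero. Its positive part `x⁺` satisfies
`x⁺ ≤ x⁺ A` and has the same mass as `x⁺ A`, so it is stationary as well. By irreducibility `x⁺`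
vanishes identically or is positive everywhere; in both cases `x` has a constant sign, and mass zero
forces `x = 0`. The SPS chain is irreducible because any two states are joined through states in
which all nodes share one slot.
-/

section StationaryVectors

open scoped Matrix

variable {n R : Type*} [Fintype n] {x y : n → R}

lemma vecMul_pow_eq_self [DecidableEq n] [Semiring R] {A : Matrix n n R} (hx : x ᵥ* A = x)
    (k : ℕ) : x ᵥ* A ^ k = x := by
  induction k with
  | zero => rw [pow_zero, Matrix.vecMul_one]
  | succ k ih => rw [pow_succ, ← Matrix.vecMul_vecMul, ih, hx]

lemma sum_vecMul_of_mem_rowStochastic [DecidableEq n] [Semiring R] [PartialOrder R]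
    [IsOrderedRing R] {A : Matrix n n R} (hA : A ∈ Matrix.rowStochastic R n) (x : n → R) :
    ∑ i, (x ᵥ* A) i = ∑ i, x i := by
  rw [← dotProduct_one, ← Matrix.dotProduct_mulVec,
    Matrix.one_vecMul_of_mem_rowStochastic hA, dotProduct_one]

variable [Ring R] [LinearOrder R] {A : Matrix n n R}

lemma pos_of_isIrreducible_of_vecMul_eq_self [IsStrictOrderedRing R] (hA : A.IsIrreducible)
    (hx : x ᵥ* A = x) (hx0 : 0 ≤ x) {i : n} (hi : 0 < x i) (j : n) : 0 < x j := by
  classical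
  obtain ⟨k, -, hk⟩ := (Matrix.isIrreducible_iff_exists_pow_pos hA.nonneg).1 hA i j
  rw [← vecMul_pow_eq_self hx k]
  exact Finset.sum_pos'
    (fun l _ => mul_nonneg (hx0 l) (Matrix.pow_apply_nonneg hA.nonneg k l j))
    ⟨i, Finset.mem_univ i, mul_pos hi hk⟩

variable [DecidableEq n]

lemma posPart_vecMul_eq_self [IsOrderedRing R] (hA : A ∈ Matrix.rowStochastic R n)
    (hx : x ᵥ* A = x) : x⁺ ᵥ* A = x⁺ := by
  have hle : ∀ j, x⁺ j ≤ (x⁺ ᵥ* A) j := fun j => by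
    refine sup_le ?_ (Matrix.nonneg_vecMul_of_mem_rowStochastic hA (posPart_nonneg x) j)
    calc x j = (x ᵥ* A) j := by rw [hx]
      _ ≤ (x⁺ ᵥ* A) j := Finset.sum_le_sum fun i _ =>
          mul_le_mul_of_nonneg_right (le_posPart x i) (Matrix.nonneg_of_mem_rowStochastic hA)
  have hmass := sum_vecMul_of_mem_rowStochastic hA x⁺
  funext j
  exact ((Finset.sum_eq_sum_iff_of_le fun j _ => hle j).1 hmass.symm j (Finset.mem_univ j)).symm

variable [IsStrictOrderedRing R]

lemma eq_zero_of_vecMul_eq_self_of_sum_eq_zero (hA : A ∈ Matrix.rowStochastic R n)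
    (hirr : A.IsIrreducible) (hx : x ᵥ* A = x) (hsum : ∑ i, x i = 0) : x = 0 := by
  by_cases hpos : ∃ i, 0 < x i
  · obtain ⟨i, hi⟩ := hpos
    have hx_pos : ∀ j, 0 < x j := fun j => posPart_pos_iff.1 <|
      pos_of_isIrreducible_of_vecMul_eq_self hirr (posPart_vecMul_eq_self hA hx)
        (posPart_nonneg x) (i := i) (posPart_pos hi) j
    exact absurd hsum (Finset.sum_pos (fun j _ => hx_pos j) ⟨i, Finset.mem_univ i⟩).ne'
  · push Not at hpos
    exact (Fintype.sum_eq_zero_iff_of_nonpos hpos).1 hsum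

lemma eq_of_vecMul_eq_self_of_sum_eq (hA : A ∈ Matrix.rowStochastic R n)
    (hirr : A.IsIrreducible) (hx : x ᵥ* A = x) (hy : y ᵥ* A = y)
    (hsum : ∑ i, x i = ∑ i, y i) : x = y := by
  refine sub_eq_zero.1 (eq_zero_of_vecMul_eq_self_of_sum_eq_zero hA hirr ?_ ?_)
  · rw [Matrix.sub_vecMul, hx, hy]
  · simp only [Pi.sub_apply, Finset.sum_sub_distrib, hsum, sub_self]

lemma comp_equiv_eq_of_vecMul_eq_self (hA : A ∈ Matrix.rowStochastic R n)
    (hirr : A.IsIrreducible) (hx : x ᵥ* A = x) (e : n ≃ n) (he : A.submatrix e e = A) :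
    x ∘ e = x := by
  refine eq_of_vecMul_eq_self_of_sum_eq hA hirr ?_ hx (Equiv.sum_comp e x)
  calc (x ∘ e) ᵥ* A = (x ∘ e) ᵥ* A.submatrix e e := by rw [he]
    _ = (x ᵥ* A) ∘ e := by
      rw [Matrix.submatrix_vecMul_equiv, Function.comp_assoc, Equiv.self_comp_symm,
        Function.comp_id]
    _ = x ∘ e := by rw [hx]

end StationaryVectors

section OccupancyChain

variable {V m : ℕ} {pE : ℝ}

lemma mem_emptyS {c : Fin V → Fin m} {s : Fin m} : s ∈ emptyS V m c ↔ ∀ u, c u ≠ s := by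
  simp [emptyS]

lemma emptyS_nonempty (hm : V < m) (c : Fin V → Fin m) : (emptyS V m c).Nonempty := by
  have hc : ¬ Function.Surjective c := fun h =>
    hm.not_ge (by simpa using Fintype.card_le_of_surjective c h)
  simpa [Finset.Nonempty, mem_emptyS, Function.Surjective] using hc

lemma emptyS_perm_comp (σ : Equiv.Perm (Fin m)) (c : Fin V → Fin m) :
    emptyS V m (σ ∘ c) = (emptyS V m c).map σ.toEmbedding := by
  ext s
  simp [mem_emptyS, Equiv.eq_symm_apply]

/-- The probability that node `u` occupies slot `s` after one step when the current state
is `c`; `spsP` is the product of these over all nodes. -/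
noncomputable def slotP (V m : ℕ) (pE : ℝ) (c : Fin V → Fin m) (u : Fin V) (s : Fin m) : ℝ :=
  (1 - pE) * (if s = c u then 1 else 0) +
    (pE / ((emptyS V m c).card : ℝ)) * (if s ∈ emptyS V m c then 1 else 0)

lemma slotP_nonneg (h0 : 0 ≤ pE) (h1 : pE ≤ 1) (c : Fin V → Fin m) (u : Fin V) (s : Fin m) :
    0 ≤ slotP V m pE c u s := by
  have : 0 ≤ 1 - pE := sub_nonneg.2 h1
  unfold slotP
  positivity

lemma slotP_pos_of_mem_emptyS (h0 : 0 < pE) (h1 : pE ≤ 1) {c : Fin V → Fin m} (u : Fin V)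
    {s : Fin m} (hs : s ∈ emptyS V m c) : 0 < slotP V m pE c u s := by
  have : 0 ≤ 1 - pE := sub_nonneg.2 h1
  have : 0 < (emptyS V m c).card := Finset.card_pos.2 ⟨s, hs⟩
  rw [slotP, if_pos hs]
  positivity

lemma sum_slotP (hm : V < m) (pE : ℝ) (c : Fin V → Fin m) (u : Fin V) :
    ∑ s, slotP V m pE c u s = 1 := by
  have hcard : ((emptyS V m c).card : ℝ) ≠ 0 :=
    Nat.cast_ne_zero.2 (emptyS_nonempty hm c).card_ne_zero
  calc ∑ s, slotP V m pE c u s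
      = (1 - pE) + pE / (emptyS V m c).card * (emptyS V m c).card := by
        simp [slotP, Finset.sum_add_distrib, mul_comm]
    _ = 1 := by rw [div_mul_cancel₀ _ hcard, sub_add_cancel]

lemma slotP_perm_comp (σ : Equiv.Perm (Fin m)) (pE : ℝ) (c : Fin V → Fin m) (u : Fin V)
    (s : Fin m) : slotP V m pE (σ ∘ c) u (σ s) = slotP V m pE c u s := by
  simp [slotP, emptyS_perm_comp]

/-- The transition matrix of the SPS occupancy chain, rows indexed by the current state. -/
noncomputable def spsMatrix (V m : ℕ) (pE : ℝ) : Matrix (Fin V → Fin m) (Fin V → Fin m) ℝ :=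
  Matrix.of (spsP V m pE)

lemma spsMatrix_apply (pE : ℝ) (c d : Fin V → Fin m) :
    spsMatrix V m pE c d = ∏ u, slotP V m pE c u (d u) :=
  rfl

lemma spsMatrix_nonneg (h0 : 0 ≤ pE) (h1 : pE ≤ 1) (c d : Fin V → Fin m) :
    0 ≤ spsMatrix V m pE c d := by
  rw [spsMatrix_apply]
  exact Finset.prod_nonneg fun u _ => slotP_nonneg h0 h1 c u (d u)

lemma spsMatrix_mem_rowStochastic (hm : V < m) (h0 : 0 ≤ pE) (h1 : pE ≤ 1) :
    spsMatrix V m pE ∈ Matrix.rowStochastic ℝ (Fin V → Fin m) := by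
  refine Matrix.mem_rowStochastic_iff_sum.2 ⟨spsMatrix_nonneg h0 h1, fun c => ?_⟩
  calc ∑ d, spsMatrix V m pE c d = ∏ u, ∑ s, slotP V m pE c u s :=
        (Fintype.prod_sum (slotP V m pE c)).symm
    _ = 1 := Finset.prod_eq_one fun u _ => sum_slotP hm pE c u

lemma spsMatrix_pos_of_forall_mem_emptyS (h0 : 0 < pE) (h1 : pE ≤ 1) {c d : Fin V → Fin m}
    (h : ∀ u, d u ∈ emptyS V m c) : 0 < spsMatrix V m pE c d := by
  rw [spsMatrix_apply]
  exact Finset.prod_pos fun u _ => slotP_pos_of_mem_emptyS h0 h1 u (h u)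

lemma spsMatrix_isIrreducible (hm : V < m) (h0 : 0 < pE) (h1 : pE ≤ 1) :
    (spsMatrix V m pE).IsIrreducible := by
  refine ⟨spsMatrix_nonneg h0.le h1, fun c d => ?_⟩
  let _ := (spsMatrix V m pE).toQuiver
  have edge : ∀ {a b : Fin V → Fin m}, (∀ u, b u ∈ emptyS V m a) → Nonempty (a ⟶ b) :=
    fun h => ⟨⟨spsMatrix_pos_of_forall_mem_emptyS h0 h1 h⟩⟩
  obtain ⟨s, hs⟩ := emptyS_nonempty hm c
  obtain ⟨t, ht⟩ := emptyS_nonempty hm d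
  obtain ⟨c_to_s⟩ := edge (b := fun _ => s) fun _ => hs
  obtain ⟨t_to_d⟩ := edge (a := fun _ => t) fun u => mem_emptyS.2 fun _ => (mem_emptyS.1 ht u).symm
  rcases eq_or_ne s t with rfl | hst
  · exact ⟨c_to_s.toPath.cons t_to_d, Nat.succ_pos _⟩
  · obtain ⟨s_to_t⟩ := edge (a := fun _ => s) (b := fun _ => t) fun _ => mem_emptyS.2 fun _ => hst
    exact ⟨(c_to_s.toPath.cons s_to_t).cons t_to_d, Nat.succ_pos _⟩

lemma spsMatrix_submatrix_perm_comp (σ : Equiv.Perm (Fin m)) (pE : ℝ) :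
    (spsMatrix V m pE).submatrix (σ ∘ ·) (σ ∘ ·) = spsMatrix V m pE := by
  ext c d
  simp only [Matrix.submatrix_apply, spsMatrix_apply, Function.comp_apply, slotP_perm_comp]

end OccupancyChain

theorem stationary_perm_invariant_general (V m : ℕ) (hm : V < m) (pE : ℝ) (hpE0 : 0 < pE)
    (hpE1 : pE ≤ 1) (π : (Fin V → Fin m) → ℝ)
    (hstat : ∀ d, π d = ∑ c : Fin V → Fin m, π c * spsP V m pE c d)
    (σ : Equiv.Perm (Fin m)) (c : Fin V → Fin m) :
    π (fun u => σ (c u)) = π c := by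
  have hfixed : Matrix.vecMul π (spsMatrix V m pE) = π := funext fun d => (hstat d).symm
  let relabel : (Fin V → Fin m) ≃ (Fin V → Fin m) := (Equiv.refl (Fin V)).arrowCongr σ
  have hinv : π ∘ relabel = π :=
    comp_equiv_eq_of_vecMul_eq_self (spsMatrix_mem_rowStochastic hm hpE0.le hpE1)
      (spsMatrix_isIrreducible hm hpE0 hpE1) hfixed relabel (spsMatrix_submatrix_perm_comp σ pE)
  exact congrFun hinv c

/-- **Invariance of the stationary pmf under relabeling of slots:** every stationary
probability mass function `π` of the SPS occupancy chain satisfies `π(σ∘c) = π(c)`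
for every permutation `σ` of the slots and every state `c`. -/
theorem stationary_perm_invariant (V m : ℕ) (hV : 1 ≤ V) (hm : V < m)
    (pE : ℝ) (hpE0 : 0 < pE) (hpE1 : pE < 1)
    (π : (Fin V → Fin m) → ℝ) (hnn : ∀ c, 0 ≤ π c)
    (hsum : ∑ c : Fin V → Fin m, π c = 1)
    (hstat : ∀ d, π d = ∑ c : Fin V → Fin m, π c * spsP V m pE c d)
    (σ : Equiv.Perm (Fin m)) (c : Fin V → Fin m) :
    π (fun u => σ (c u)) = π c :=
  stationary_perm_invariant_general V m hm pE hpE0 hpE1.le π hstat σ c
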